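/- Let {C_0, ..., C_d} be a d-critical family in R^d with hollow D (a bounded connected component of the complement of the union). Then the closure of the convex hull of D is a d-simplex; specifically, cl(Conv(D)) equals the convex hull of the points p_0, ..., p_d, where p_j is the unique point of ∩_{i≠j} C_i nearest to C_j. -/

import Mathlib

/-!
Let `D` be the hollow and `p j ∈ ⋂ i ≠ j, C i` the given nearest points.

* The hull of the `p i` with `i ≠ j` lies in `C j`. A Radon partition of the `p j` would therefore
  produce a point common to all the `C i`, so the `p j` are affinely independent.
* If `y` lies in no `C i` and outside the hull of the `p j`, a Radon partition of `y` and the `p j`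
  yields a ray from `y` that meets every `C i`. The opposite ray then misses every `C i`, so the
  component of `y` is unbounded. Hence `D` lies in the hull of the `p j`.
* Suppose `e ∈ closure D` lies in fewer than `d` of the `C i`. For `y ∈ D` close to `e`, the
  Hahn–Banach functionals separating `y` from these sets have a common kernel vector, so `D`
  contains a segment of fixed length centred at `y`. Letting `y → e` shows that `e` is not an
  extreme point of `closure D`.
* So an extreme point of `closure D` lies in `⋂ i ≠ j, C i` for some `j`, hence is at least as far
  from `C j` as `p j`. The only such point in the hull of the `p i` is `p j`. If `p j` were not in
  `closure D`, then all extreme points of `closure D` would lie in `C j`, and so would `D`.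
-/

open Filter Metric Module Set Topology

section Convexity

variable {ι E : Type*} [AddCommGroup E] [Module ℝ E] {C : ι → Set E} {p : ι → E}

theorem convexHull_image_subset_of_notMem {A : Set E} (hA : Convex ℝ A) {j : ι}
    (hp : ∀ i ≠ j, p i ∈ A) {S : Set ι} (hj : j ∉ S) : convexHull ℝ (p '' S) ⊆ A := by
  refine convexHull_min ?_ hA
  rintro _ ⟨i, hi, rfl⟩
  exact hp i (ne_of_mem_of_not_mem hi hj)

theorem affineIndependent_of_iInter_eq_empty (hconv : ∀ i, Convex ℝ (C i))
    (hp : ∀ i, ∀ j ≠ i, p j ∈ C i) (hempty : ⋂ i, C i = ∅) : AffineIndependent ℝ p := by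
  by_contra hdep
  obtain ⟨S, z, hzS, hzSc⟩ := Convex.radon_partition hdep
  suffices z ∈ ⋂ i, C i from notMem_empty z (hempty ▸ this)
  refine mem_iInter.2 fun i => ?_
  by_cases hi : i ∈ S
  · exact convexHull_image_subset_of_notMem (hconv i) (hp i) (notMem_compl_iff.2 hi) hzSc
  · exact convexHull_image_subset_of_notMem (hconv i) (hp i) hi hzS

theorem exists_radon_partition_insert [Fintype ι] [FiniteDimensional ℝ E]
    (hcard : finrank ℝ E < Fintype.card ι) (p : ι → E) (y : E) :
    ∃ S : Set ι, (convexHull ℝ (insert y (p '' S)) ∩ convexHull ℝ (p '' Sᶜ)).Nonempty := by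
  let f : Option ι → E := fun o => o.elim y p
  have hdep : ¬ AffineIndependent ℝ f := fun hf => by
    have hle := hf.card_le_finrank_succ.trans
      (Nat.succ_le_succ (vectorSpan ℝ (range f)).finrank_le)
    rw [Fintype.card_option] at hle
    lia
  have himage_insert : ∀ I : Set (Option ι), f '' I ⊆ insert y (p '' (some ⁻¹' I)) := by
    rintro I _ ⟨_ | i, hi, rfl⟩
    exacts [mem_insert _ _, mem_insert_of_mem _ ⟨i, hi, rfl⟩]
  have himage : ∀ I : Set (Option ι), none ∉ I → f '' I ⊆ p '' (some ⁻¹' I) := by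
    rintro I hI _ ⟨_ | i, hi, rfl⟩
    exacts [(hI hi).elim, ⟨i, hi, rfl⟩]
  obtain ⟨I, z, hzI, hzIc⟩ := Convex.radon_partition hdep
  by_cases hI : none ∈ I
  · exact ⟨some ⁻¹' I, z, convexHull_mono (himage_insert I) hzI,
      convexHull_mono (himage Iᶜ (notMem_compl_iff.2 hI)) hzIc⟩
  · refine ⟨(some ⁻¹' I)ᶜ, z, convexHull_mono (himage_insert Iᶜ) hzIc, ?_⟩
    rw [compl_compl]
    exact convexHull_mono (himage I hI) hzI

theorem exists_ray_meeting_forall [Fintype ι] [FiniteDimensional ℝ E]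
    (hcard : finrank ℝ E < Fintype.card ι) (hconv : ∀ i, Convex ℝ (C i))
    (hp : ∀ i, ∀ j ≠ i, p j ∈ C i) {y : E} (hy : y ∉ convexHull ℝ (range p)) :
    ∃ w ≠ 0, ∀ i, ∃ s > (0 : ℝ), y + s • w ∈ C i := by
  obtain ⟨S, z, hzS, hzSc⟩ := exists_radon_partition_insert hcard p y
  have hzy : z - y ≠ 0 := fun h =>
    hy (sub_eq_zero.1 h ▸ convexHull_mono (image_subset_range p Sᶜ) hzSc)
  have hS : S.Nonempty := by
    by_contra! rfl
    rw [image_empty, insert_empty_eq, convexHull_singleton, mem_singleton_iff] at hzS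
    exact hzy (sub_eq_zero.2 hzS)
  rw [convexHull_insert (hS.image p), convexJoin_singleton_left, mem_iUnion₂] at hzS
  obtain ⟨q, hq, a, b, -, hb, hab, rfl⟩ := hzS
  have hz : a • y + b • q - y = b • (q - y) := by
    rw [eq_sub_of_add_eq hab]
    module
  rw [hz] at hzy
  have hb0 : b ≠ 0 := left_ne_zero_of_smul hzy
  refine ⟨q - y, right_ne_zero_of_smul hzy, fun i => ?_⟩
  by_cases hi : i ∈ S
  · refine ⟨b, hb.lt_of_ne' hb0, ?_⟩
    rw [← hz, add_sub_cancel]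
    exact convexHull_image_subset_of_notMem (hconv i) (hp i) (notMem_compl_iff.2 hi) hzSc
  · refine ⟨1, one_pos, ?_⟩
    rw [one_smul, add_sub_cancel]
    exact convexHull_image_subset_of_notMem (hconv i) (hp i) hi hq

theorem add_smul_neg_notMem_of_add_smul_mem {A : Set E} (hA : Convex ℝ A) {y w : E} (hy : y ∉ A)
    {s t : ℝ} (hs : 0 < s) (ht : 0 ≤ t) (hmem : y + s • w ∈ A) : y + t • -w ∉ A := fun hneg => by
  have hst : s + t ≠ 0 := by positivity
  refine hy <| (hA.segment_subset hneg hmem)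
    ⟨s / (s + t), t / (s + t), by positivity, by positivity, by field_simp, ?_⟩
  match_scalars <;> field_simp
  ring

end Convexity

section KreinMilman

variable {ι E : Type*} [AddCommGroup E] [Module ℝ E] [TopologicalSpace E] [T2Space E]
  [IsTopologicalAddGroup E] [ContinuousSMul ℝ E] [LocallyConvexSpace ℝ E] {K A : Set E}

theorem subset_of_extremePoints_subset (hK : IsCompact K) (hconv : Convex ℝ A)
    (hclosed : IsClosed A) (hext : K.extremePoints ℝ ⊆ A) : K ⊆ A := by
  intro z hzK
  by_contra hzA
  obtain ⟨l, c, hlA, hlz⟩ := geometric_hahn_banach_closed_point hconv hclosed hzA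
  have hface : IsExposed ℝ K (l.toExposed K) := ContinuousLinearMap.toExposed.isExposed
  have hface_nonempty : (l.toExposed K).Nonempty :=
    hK.exists_isMaxOn ⟨z, hzK⟩ l.continuous.continuousOn
  obtain ⟨e, he⟩ := (hface.isCompact hK).extremePoints_nonempty hface_nonempty
  have heA : e ∈ A := hext (hface.isExtreme.extremePoints_subset_extremePoints he)
  have hze : l z ≤ l e := he.1.2 z hzK
  exact (hlz.trans_le hze).not_gt (hlA e heA)

theorem mem_of_extremePoints_subset_range (hK : IsCompact K) (hconv : Convex ℝ A)
    (hclosed : IsClosed A) {p : ι → E} {j : ι} (hp : ∀ i ≠ j, p i ∈ A)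
    (hext : K.extremePoints ℝ ⊆ range p) (hKA : ¬ K ⊆ A) : p j ∈ K := by
  by_contra hj
  refine hKA (subset_of_extremePoints_subset hK hconv hclosed fun e he => ?_)
  obtain ⟨i, rfl⟩ := hext he
  refine hp i ?_
  rintro rfl
  exact hj (extremePoints_subset he)

end KreinMilman

section NormedSpace

variable {ι E : Type*} [NormedAddCommGroup E] [NormedSpace ℝ E] {C : ι → Set E}

theorem add_mem_connectedComponentIn {F : Set E} {x y v : E} (hy : y ∈ connectedComponentIn F x)
    (hF : ∀ t ∈ Icc (0 : ℝ) 1, y + t • v ∈ F) : y + v ∈ connectedComponentIn F x := by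
  rw [connectedComponentIn_eq hy]
  refine (convex_segment y (y + v)).isPreconnected.subset_connectedComponentIn
    (left_mem_segment ℝ _ _) ?_ (right_mem_segment ℝ _ _)
  rw [segment_eq_image', add_sub_cancel_left]
  exact image_subset_iff.2 hF

theorem not_isBounded_of_forall_add_smul_mem {D : Set E} {y w : E} (hw : w ≠ 0)
    (hray : ∀ t : ℝ, 0 ≤ t → y + t • w ∈ D) : ¬ Bornology.IsBounded D := fun hD => by
  have htendsto : Tendsto (fun t : ℝ => y + t • w) atTop (Bornology.cobounded E) :=
    ((tendsto_id.atTop_smul_const_tendsto_asymptoticNhds w).const_vadd_asymptoticNhds y).mono_right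
      (AffineSpace.asymptoticNhds_le_cobounded hw)
  obtain ⟨t, htD, ht⟩ := ((htendsto.eventually hD).and (eventually_ge_atTop 0)).exists
  exact htD (hray t ht)

theorem connectedComponentIn_compl_iUnion_subset_convexHull [Fintype ι] [FiniteDimensional ℝ E]
    (hcard : finrank ℝ E < Fintype.card ι) (hconv : ∀ i, Convex ℝ (C i)) {p : ι → E}
    (hp : ∀ i, ∀ j ≠ i, p j ∈ C i) {x : E}
    (hbdd : Bornology.IsBounded (connectedComponentIn (⋃ i, C i)ᶜ x)) :
    connectedComponentIn (⋃ i, C i)ᶜ x ⊆ convexHull ℝ (range p) := by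
  intro y hy
  by_contra hyp
  have hyC : ∀ i, y ∉ C i := by simpa using connectedComponentIn_subset _ _ hy
  obtain ⟨w, hw, hmeet⟩ := exists_ray_meeting_forall hcard hconv hp hyp
  suffices hray : ∀ t : ℝ, 0 ≤ t → y + t • -w ∈ connectedComponentIn (⋃ i, C i)ᶜ x from
    not_isBounded_of_forall_add_smul_mem (neg_ne_zero.2 hw) hray hbdd
  refine fun t ht => add_mem_connectedComponentIn hy fun θ hθ => ?_
  simp only [mem_compl_iff, mem_iUnion, not_exists, smul_smul]
  intro i
  obtain ⟨s, hs, hsi⟩ := hmeet i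
  exact add_smul_neg_notMem_of_add_smul_mem (hconv i) (hyC i) hs (mul_nonneg hθ.1 ht) hsi

theorem exists_mem_sphere_forall_add_smul_notMem [Finite ι] [FiniteDimensional ℝ E]
    (hcard : Nat.card ι < finrank ℝ E) (hclosed : ∀ i, IsClosed (C i))
    (hconv : ∀ i, Convex ℝ (C i)) {y : E} (hy : ∀ i, y ∉ C i)
    {r : ℝ} (hr : 0 ≤ r) : ∃ u ∈ sphere (0 : E) r, ∀ (i) (t : ℝ), y + t • u ∉ C i := by
  have := Fintype.ofFinite ι
  choose f c hfy hfC using fun i =>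
    geometric_hahn_banach_point_closed (hconv i) (hclosed i) (hy i)
  have hker : LinearMap.ker (LinearMap.pi fun i => (f i).toLinearMap) ≠ ⊥ :=
    LinearMap.ker_ne_bot_of_finrank_lt (by rwa [finrank_pi, ← Nat.card_eq_fintype_card])
  obtain ⟨u, hu, hu0⟩ := Submodule.exists_mem_ne_zero_of_ne_bot hker
  refine ⟨(r / ‖u‖) • u, ?_, fun i t hmem => ?_⟩
  · rw [mem_sphere_zero_iff_norm, norm_smul, Real.norm_of_nonneg (by positivity),
      div_mul_cancel₀ _ (norm_ne_zero_iff.2 hu0)]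
  have hfu : f i u = 0 := congrFun (LinearMap.mem_ker.1 hu) i
  have hconst : f i (y + t • (r / ‖u‖) • u) = f i y := by simp [hfu]
  exact ((hfy i).trans (hfC i _ hmem)).ne' hconst

theorem notMem_extremePoints_closure_of_frequently [ProperSpace E] {D : Set E} {e : E} {r : ℝ}
    (hr : 0 < r) (hfreq : ∃ᶠ y in 𝓝 e, ∃ u ∈ sphere (0 : E) r, y + u ∈ D ∧ y - u ∈ D) :
    e ∉ (closure D).extremePoints ℝ := fun he => by
  let F : Set (E × sphere (0 : E) r) := {q | q.1 + q.2 ∈ closure D ∧ q.1 - q.2 ∈ closure D}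
  have hF : IsClosed F :=
    (isClosed_closure.preimage (by fun_prop)).inter (isClosed_closure.preimage (by fun_prop))
  have heF : e ∈ Prod.fst '' F := by
    refine (isClosedMap_fst_of_compactSpace F hF).closure_subset (mem_closure_iff_frequently.2 ?_)
    refine hfreq.mono fun y ⟨u, hu, hadd, hsub⟩ => ?_
    exact ⟨(y, ⟨u, hu⟩), ⟨subset_closure hadd, subset_closure hsub⟩, rfl⟩
  obtain ⟨⟨_, u, hu⟩, ⟨hadd, hsub⟩, rfl⟩ := heF
  have hu0 : u = 0 := add_eq_left.1 <| he.2 hadd hsub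
    ⟨1 / 2, 1 / 2, by norm_num, by norm_num, by norm_num, by module⟩
  exact ne_of_mem_sphere hu hr.ne' hu0

theorem exists_eventually_exists_add_mem_sub_mem [Finite ι] [FiniteDimensional ℝ E]
    (hclosed : ∀ i, IsClosed (C i)) (hconv : ∀ i, Convex ℝ (C i)) {x e : E}
    (hcard : {i | e ∈ C i}.ncard < finrank ℝ E) :
    ∃ r > 0, ∀ᶠ y in 𝓝[connectedComponentIn (⋃ i, C i)ᶜ x] e, ∃ u ∈ sphere (0 : E) r,
      y + u ∈ connectedComponentIn (⋃ i, C i)ᶜ x ∧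
      y - u ∈ connectedComponentIn (⋃ i, C i)ᶜ x := by
  have hnhds : ∀ᶠ z in 𝓝 e, ∀ i, e ∉ C i → z ∉ C i := eventually_all.2 fun i =>
    eventually_imp_distrib_left.2 fun hi => (hclosed i).isOpen_compl.mem_nhds hi
  obtain ⟨R, hR, hball⟩ := eventually_nhds_iff_ball.1 hnhds
  refine ⟨R / 2, half_pos hR, ?_⟩
  filter_upwards [self_mem_nhdsWithin, mem_nhdsWithin_of_mem_nhds (ball_mem_nhds e (half_pos hR))]
    with y hyD hye
  have hyC : ∀ i, y ∉ C i := by simpa using connectedComponentIn_subset _ _ hyD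
  obtain ⟨u, hu, hline⟩ := exists_mem_sphere_forall_add_smul_notMem
    (C := fun i : {i | e ∈ C i} => C i) hcard (fun i => hclosed i) (fun i => hconv i)
    (fun i => hyC i) (half_pos hR).le
  have hmove : ∀ c : ℝ, |c| = 1 → y + c • u ∈ connectedComponentIn (⋃ i, C i)ᶜ x := by
    refine fun c hc => add_mem_connectedComponentIn hyD fun θ hθ => ?_
    simp only [mem_compl_iff, mem_iUnion, not_exists, smul_smul]
    intro i
    by_cases hi : e ∈ C i
    · exact hline ⟨i, hi⟩ (θ * c)
    refine hball _ ?_ i hi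
    calc dist (y + (θ * c) • u) e
        ≤ dist (y + (θ * c) • u) y + dist y e := dist_triangle _ _ _
      _ = θ * (R / 2) + dist y e := by
        rw [dist_self_add_left, norm_smul, norm_mul, Real.norm_of_nonneg hθ.1, Real.norm_eq_abs c,
          hc, mul_one, mem_sphere_zero_iff_norm.1 hu]
      _ < 1 * (R / 2) + R / 2 := add_lt_add_of_le_of_lt (by gcongr; exact hθ.2) hye
      _ = R := by ring
  refine ⟨u, hu, by simpa using hmove 1 abs_one, ?_⟩
  simpa [sub_eq_add_neg] using hmove (-1) (by simp)

theorem finrank_le_ncard_of_mem_extremePoints [Finite ι] [FiniteDimensional ℝ E]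
    (hclosed : ∀ i, IsClosed (C i)) (hconv : ∀ i, Convex ℝ (C i)) {x e : E}
    (he : e ∈ (closure (connectedComponentIn (⋃ i, C i)ᶜ x)).extremePoints ℝ) :
    finrank ℝ E ≤ {i | e ∈ C i}.ncard := by
  by_contra! hcard
  obtain ⟨r, hr, hev⟩ := exists_eventually_exists_add_mem_sub_mem hclosed hconv (x := x) hcard
  have := mem_closure_iff_nhdsWithin_neBot.1 (extremePoints_subset he)
  exact notMem_extremePoints_closure_of_frequently hr
    (hev.frequently.filter_mono nhdsWithin_le_nhds) he

theorem exists_forall_ne_mem_of_mem_extremePoints [Fintype ι] [FiniteDimensional ℝ E]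
    (hcard : Fintype.card ι = finrank ℝ E + 1) (hclosed : ∀ i, IsClosed (C i))
    (hconv : ∀ i, Convex ℝ (C i)) {x e : E}
    (he : e ∈ (closure (connectedComponentIn (⋃ i, C i)ᶜ x)).extremePoints ℝ) :
    ∃ j, ∀ i ≠ j, e ∈ C i := by
  have : Nonempty ι := Fintype.card_pos_iff.1 (by lia)
  have hle := finrank_le_ncard_of_mem_extremePoints hclosed hconv he
  have hadd := ncard_add_ncard_compl {i | e ∈ C i}
  rw [Nat.card_eq_fintype_card] at hadd
  obtain ⟨j, hj⟩ := (ncard_le_one_iff_subset_singleton (s := {i | e ∈ C i}ᶜ)).1 (by lia)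
  exact ⟨j, fun i hij => not_not.1 fun hi => hij (hj hi)⟩

theorem infDist_add_smul_le {A : Set E} (hconv : Convex ℝ A) {q r : E} (hr : r ∈ A) {a b : ℝ}
    (ha : 0 ≤ a) (hb : 0 ≤ b) (hab : a + b = 1) :
    infDist (a • q + b • r) A ≤ a * infDist q A := by
  have : Nonempty A := ⟨r, hr⟩
  rw [infDist_eq_iInf (x := q), Real.mul_iInf_of_nonneg ha]
  refine le_ciInf fun z => ?_
  calc infDist (a • q + b • r) A
      ≤ dist (a • q + b • r) (a • (z : E) + b • r) :=
        infDist_le_dist_of_mem (hconv z.2 hr ha hb hab)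
    _ = a * dist q z := by rw [dist_add_right, dist_smul₀, Real.norm_of_nonneg ha]

theorem eq_of_mem_convexHull_insert_of_infDist_le {A : Set E} (hclosed : IsClosed A)
    (hconv : Convex ℝ A) {q e : E} (hq : q ∉ A) (he : e ∈ convexHull ℝ (insert q A))
    (hle : infDist q A ≤ infDist e A) : e = q := by
  rcases A.eq_empty_or_nonempty with rfl | hA
  · simpa using he
  rw [convexHull_insert hA, hconv.convexHull_eq, convexJoin_singleton_left, mem_iUnion₂] at he
  obtain ⟨r, hr, a, b, ha, hb, hab, rfl⟩ := he
  have hpos : 0 < infDist q A := (hclosed.notMem_iff_infDist_pos hA).1 hq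
  have hcontract : infDist (a • q + b • r) A ≤ a * infDist q A :=
    infDist_add_smul_le hconv hr ha hb hab
  have ha1 : 1 ≤ a := le_of_mul_le_mul_right (by linarith) hpos
  obtain rfl : b = 0 := by linarith
  obtain rfl : a = 1 := by linarith
  simp

theorem extremePoints_closure_connectedComponentIn_subset_range [Fintype ι]
    [FiniteDimensional ℝ E] (hcard : Fintype.card ι = finrank ℝ E + 1)
    (hclosed : ∀ i, IsClosed (C i)) (hconv : ∀ i, Convex ℝ (C i)) (hempty : ⋂ i, C i = ∅)
    {p : ι → E} (hp : ∀ i, ∀ j ≠ i, p j ∈ C i)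
    (hnearest : ∀ j q, (∀ i ≠ j, q ∈ C i) → infDist (p j) (C j) ≤ infDist q (C j)) {x : E}
    (hbdd : Bornology.IsBounded (connectedComponentIn (⋃ i, C i)ᶜ x)) :
    (closure (connectedComponentIn (⋃ i, C i)ᶜ x)).extremePoints ℝ ⊆ range p := by
  intro e he
  obtain ⟨j, hj⟩ := exists_forall_ne_mem_of_mem_extremePoints hcard hclosed hconv he
  have hpj : p j ∉ C j := fun hmem => by
    refine notMem_empty (p j) (hempty ▸ mem_iInter.2 fun i => ?_)
    obtain rfl | hij := eq_or_ne j i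
    exacts [hmem, hp i j hij]
  have hsimplex : closure (connectedComponentIn (⋃ i, C i)ᶜ x) ⊆ convexHull ℝ (range p) :=
    closure_minimal
      (connectedComponentIn_compl_iUnion_subset_convexHull (by lia) hconv hp hbdd)
      ((finite_range p).isClosed_convexHull ℝ)
  have hrange : range p ⊆ insert (p j) (C j) := by
    rintro _ ⟨i, rfl⟩
    obtain rfl | hij := eq_or_ne i j
    exacts [mem_insert _ _, mem_insert_of_mem _ (hp j i hij)]
  exact ⟨j, (eq_of_mem_convexHull_insert_of_infDist_le (hclosed j) (hconv j) hpj
    (convexHull_mono hrange (hsimplex he.1)) (hnearest j e hj)).symm⟩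

end NormedSpace

theorem hollow_theorem_general {ι E : Type*} [Fintype ι] [NormedAddCommGroup E] [NormedSpace ℝ E]
    [FiniteDimensional ℝ E] (hcard : Fintype.card ι = finrank ℝ E + 1) {C : ι → Set E}
    (hclosed : ∀ i, IsClosed (C i)) (hconv : ∀ i, Convex ℝ (C i)) (hempty : ⋂ i, C i = ∅)
    {x : E} (hx : x ∈ (⋃ i, C i)ᶜ)
    (hbdd : Bornology.IsBounded (connectedComponentIn (⋃ i, C i)ᶜ x)) {p : ι → E}
    (hp : ∀ i, ∀ j ≠ i, p j ∈ C i)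
    (hnearest : ∀ j q, (∀ i ≠ j, q ∈ C i) → infDist (p j) (C j) ≤ infDist q (C j)) :
    AffineIndependent ℝ p ∧
      closure (convexHull ℝ (connectedComponentIn (⋃ i, C i)ᶜ x)) = convexHull ℝ (range p) := by
  refine ⟨affineIndependent_of_iInter_eq_empty hconv hp hempty, Subset.antisymm ?_ ?_⟩
  · refine closure_minimal (convexHull_min ?_ (convex_convexHull ℝ _))
      ((finite_range p).isClosed_convexHull ℝ)
    exact connectedComponentIn_compl_iUnion_subset_convexHull (by lia) hconv hp hbdd
  · refine convexHull_min ?_ (convex_convexHull ℝ _).closure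
    rintro _ ⟨j, rfl⟩
    have hext := extremePoints_closure_connectedComponentIn_subset_range hcard hclosed hconv hempty
      hp hnearest hbdd
    have hnot_subset : ¬ closure (connectedComponentIn (⋃ i, C i)ᶜ x) ⊆ C j := fun hsubset =>
      hx (mem_iUnion_of_mem j (hsubset (subset_closure (mem_connectedComponentIn hx))))
    exact closure_mono (subset_convexHull ℝ _) <| mem_of_extremePoints_subset_range
      hbdd.isCompact_closure (hconv j) (hclosed j) (hp j) hext hnot_subset

/-- The Hollow Theorem: the closure of the convex hull of the hollow of a
d-critical family is the d-simplex spanned by the unique nearest points p_j. -/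
theorem hollow_theorem (d : ℕ)
    (C : Fin (d + 1) → Set (EuclideanSpace ℝ (Fin d)))
    (hcomp : ∀ i, IsCompact (C i)) (hconv : ∀ i, Convex ℝ (C i))
    (hcrit : ∀ j, (⋂ i ∈ {i : Fin (d + 1) | i ≠ j}, C i).Nonempty)
    (hempty : (⋂ i, C i) = ∅)
    (x : EuclideanSpace ℝ (Fin d)) (hx : x ∈ (⋃ i, C i)ᶜ)
    (D : Set (EuclideanSpace ℝ (Fin d)))
    (hD : D = connectedComponentIn (⋃ i, C i)ᶜ x)
    (hbd : Bornology.IsBounded D)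
    (p : Fin (d + 1) → EuclideanSpace ℝ (Fin d))
    (hp : ∀ j, p j ∈ (⋂ i ∈ {i : Fin (d + 1) | i ≠ j}, C i) ∧
      ∀ q ∈ (⋂ i ∈ {i : Fin (d + 1) | i ≠ j}, C i),
        Metric.infDist (p j) (C j) ≤ Metric.infDist q (C j)) :
    AffineIndependent ℝ p ∧
      closure (convexHull ℝ D) = convexHull ℝ (Set.range p) := by
  subst hD
  simp only [mem_iInter, mem_ofPred_eq] at hp
  exact hollow_theorem_general (by simp) (fun i => (hcomp i).isClosed) hconv hempty hx hbd
    (fun i j hij => (hp j).1 i hij.symm) (fun j => (hp j).2)
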